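/- Let n ≥ 2, let h : ℝⁿ → ℝⁿ be continuous and injective, let L : ℝⁿ → ℝ be a nonzero linear (or affine) map, and let ψ : ℝ → ℝ be continuous and injective. Set f = ψ ∘ L ∘ h. Then for every y ∈ ℝ, the level set f⁻¹(y) is homeomorphic to an open subset of an (n−1)-dimensional affine hyperplane in ℝⁿ (hence to an open subset of ℝ^{n−1}), and every path component of f⁻¹(y) is unbounded. -/

import Mathlib

open scoped Topology

noncomputable section

/-- `Euc n` is Euclidean space `ℝⁿ`. -/
abbrev Euc (n : ℕ) : Type := EuclideanSpace ℝ (Fin n)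

open MeasureTheory Set Metric Module Filter

/-!
A level set of `ψ ∘ L ∘ h` is empty or the preimage under `h` of an affine subspace `A`. By
invariance of domain `h` is an open embedding, so `h ⁻¹' A` is homeomorphic to an open subset of
the direction of `A`. It is moreover closed, so a bounded path component would be compact, and its
image in the direction of `A` would be nonempty, compact and open, hence everything: impossible in
positive dimension.

Invariance of domain is reduced to Brouwer's fixed point theorem: if `f 0` were not interior to
the image of the ball, a continuous left inverse `G` of `f`, whose only zero on the image is `f 0`,
could be perturbed slightly into a map without zeros there, which Brouwer's theorem forbids.
Brouwer's theorem comes from the absence of `C¹` retractions `r` onto the sphere: the volume of the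
image of the ball under `x ↦ x + t (r x - x)` is a polynomial in `t`, constant for small `t`
because these maps permute the ball, but `0` at `t = 1`.
-/

lemma image_eq_of_isOpen_image {X : Type*} [TopologicalSpace X] [T2Space X] {g : X → X}
    {U K : Set X} (hU : IsPreconnected U) (hUne : U.Nonempty) (hUK : U ⊆ K) (hK : IsCompact K)
    (hg : ContinuousOn g K) (hopen : IsOpen (g '' U)) (hmaps : MapsTo g U U)
    (hboundary : ∀ x ∈ K \ U, g x ∉ U) : g '' U = U := by
  refine hmaps.image_subset.antisymm ?_
  refine hU.subset_left_of_subset_union hopen (hK.image_of_continuousOn hg).isClosed.isOpen_compl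
    (disjoint_compl_right_iff_subset.2 (image_mono hUK)) (fun y hy => ?_) ?_
  · by_contra hcover
    simp only [mem_union, mem_compl_iff, not_or, not_not] at hcover
    obtain ⟨hyU, x, hxK, rfl⟩ := hcover
    exact hboundary x ⟨hxK, fun hxU => hyU (mem_image_of_mem g hxU)⟩ hy
  · obtain ⟨x, hx⟩ := hUne
    exact ⟨g x, hmaps hx, mem_image_of_mem g hx⟩

section ChangeOfVariables

variable {E : Type*} [NormedAddCommGroup E] [NormedSpace ℝ E]

lemma approximatesLinearOn_add_smul {u : E → E} {s : Set E} {K : NNReal}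
    (hu : LipschitzOnWith K u s) (t : ℝ) :
    ApproximatesLinearOn (fun x => x + t • u x)
      (ContinuousLinearEquiv.refl ℝ E : E →L[ℝ] E) s (‖t‖₊ * K) := by
  intro x hx y hy
  have diff_eq : x + t • u x - (y + t • u y) - (ContinuousLinearEquiv.refl ℝ E) (x - y) =
      t • (u x - u y) := by
    simp only [ContinuousLinearEquiv.refl_apply]
    module
  rw [ContinuousLinearEquiv.coe_coe, diff_eq, norm_smul, NNReal.coe_mul, coe_nnnorm, mul_assoc]
  gcongr
  exact hu.norm_sub_le hx hy

lemma continuous_det_one_add_smul_fderiv {u : E → E} (hu : ContDiff ℝ 1 u) :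
    Continuous fun p : ℝ × E => (1 + p.1 • fderiv ℝ u p.2).det :=
  ContinuousLinearMap.continuous_det.comp (continuous_const.add
    (continuous_fst.smul ((hu.continuous_fderiv one_ne_zero).comp continuous_snd)))

lemma eventually_det_one_add_smul_fderiv_pos {u : E → E} (hu : ContDiff ℝ 1 u) {s : Set E}
    (hs : IsCompact s) : ∀ᶠ t in 𝓝 (0 : ℝ), ∀ x ∈ s, 0 < (1 + t • fderiv ℝ u x).det := by
  refine hs.eventually_forall_of_forall_eventually fun x _ => ?_
  refine ((continuous_det_one_add_smul_fderiv hu).tendsto (0, x)).eventually_const_lt ?_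
  simp [ContinuousLinearMap.det]

variable [FiniteDimensional ℝ E]

lemma det_one_add_smul_eq_eval_interpolate (A : E →L[ℝ] E) (t : ℝ) :
    (1 + t • A).det = (Lagrange.interpolate (Finset.range (finrank ℝ E + 1)) (fun i : ℕ => (i : ℝ))
      fun i => (1 + (i : ℝ) • A).det).eval t := by
  let b := finBasis ℝ E
  let M := LinearMap.toMatrix b b (A : E →ₗ[ℝ] E)
  let p : Polynomial ℝ := Matrix.det
    ((Polynomial.X : Polynomial ℝ) • M.map Polynomial.C + (1 : Matrix _ _ ℝ).map Polynomial.C)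
  have eval_p : ∀ s : ℝ, p.eval s = (1 + s • A).det := by
    intro s
    have det_eq : (1 + s • A).det = Matrix.det (1 + s • M) := by
      rw [ContinuousLinearMap.det, ← LinearMap.det_toMatrix b]
      congr 1
      simp [M, LinearMap.toMatrix_one]
    rw [det_eq, ← Polynomial.coe_evalRingHom, RingHom.map_det]
    congr 1
    ext i j
    by_cases hij : i = j <;> simp [hij, add_comm, mul_comm s]
  have degree_p : p.degree < (Finset.range (finrank ℝ E + 1)).card := by
    rw [Finset.card_range]
    refine Polynomial.degree_le_natDegree.trans_lt (Nat.cast_lt.2 (Nat.lt_succ_of_le ?_))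
    exact (Polynomial.natDegree_det_X_add_C_le M 1).trans_eq (Fintype.card_fin _)
  rw [← eval_p, Lagrange.eq_interpolate (v := fun i : ℕ => (i : ℝ)) Nat.cast_injective.injOn
    degree_p]
  simp only [eval_p]

lemma exists_polynomial_integral_det_one_add_smul {X : Type*} [MeasurableSpace X] {ν : Measure X}
    {A : X → E →L[ℝ] E} (hA : ∀ t : ℝ, Integrable (fun x => (1 + t • A x).det) ν) :
    ∃ p : Polynomial ℝ, ∀ t : ℝ, ∫ x, (1 + t • A x).det ∂ν = p.eval t := by
  refine ⟨Lagrange.interpolate (Finset.range (finrank ℝ E + 1)) (fun i : ℕ => (i : ℝ))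
    fun i => ∫ x, (1 + (i : ℝ) • A x).det ∂ν, fun t => ?_⟩
  simp_rw [det_one_add_smul_eq_eval_interpolate _ t, Lagrange.interpolate_apply,
    Polynomial.eval_finsetSum, Polynomial.eval_mul, Polynomial.eval_C]
  rw [integral_finsetSum _ fun (i : ℕ) _ => (hA i).mul_const _]
  simp only [integral_mul_const]

lemma bijOn_ball_add_smul {u : E → E} {K : NNReal}
    (hu : LipschitzOnWith K u (closedBall 0 1))
    (hball : MapsTo (fun x => x + u x) (ball 0 1) (closedBall 0 1))
    (hsphere : ∀ x ∈ sphere (0 : E) 1, u x = 0)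
    {t : ℝ} (ht0 : 0 < t) (ht1 : t < 1) (htK : t * K < 1) :
    BijOn (fun x => x + t • u x) (ball 0 1) (ball 0 1) := by
  have happrox := approximatesLinearOn_add_smul hu t
  have hsmall : Subsingleton E ∨
      ‖t‖₊ * K < ‖((ContinuousLinearEquiv.refl ℝ E).symm : E →L[ℝ] E)‖₊⁻¹ := by
    refine (subsingleton_or_nontrivial E).imp_right fun (_ : Nontrivial E) => ?_
    have hnorm : ‖((ContinuousLinearEquiv.refl ℝ E).symm : E →L[ℝ] E)‖₊ = 1 :=
      ContinuousLinearMap.nnnorm_id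
    rw [hnorm, inv_one, ← NNReal.coe_lt_coe, NNReal.coe_mul, coe_nnnorm,
      Real.norm_of_nonneg ht0.le]
    exact htK
  have hmaps : MapsTo (fun x => x + t • u x) (ball (0 : E) 1) (ball 0 1) := by
    intro x hx
    have hxu := hball hx
    rw [mem_ball_zero_iff] at hx ⊢
    rw [mem_closedBall_zero_iff] at hxu
    calc ‖x + t • u x‖ = ‖(1 - t) • x + t • (x + u x)‖ := by congr 1; module
      _ ≤ (1 - t) * ‖x‖ + t * ‖x + u x‖ := by
        refine (norm_add_le _ _).trans_eq ?_
        rw [norm_smul, norm_smul, Real.norm_of_nonneg (sub_nonneg.2 ht1.le),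
          Real.norm_of_nonneg ht0.le]
      _ < 1 := by nlinarith
  have hopen : IsOpen ((fun x => x + t • u x) '' ball 0 1) :=
    (happrox.mono_set ball_subset_closedBall).open_image
      (ContinuousLinearEquiv.refl ℝ E).toNonlinearRightInverse isOpen_ball hsmall
  have himage := image_eq_of_isOpen_image (convex_ball (0 : E) 1).isPreconnected
    (nonempty_ball.2 one_pos) ball_subset_closedBall (isCompact_closedBall 0 1)
    happrox.continuousOn hopen hmaps (by
      rw [closedBall_sdiff_ball]
      intro x hx
      simpa [hsphere x hx] using (mem_sphere_zero_iff_norm.1 hx).ge)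
  exact ⟨hmaps, (happrox.injOn hsmall).mono ball_subset_closedBall, himage.ge⟩

lemma det_eq_zero_of_eventually_norm_eq {r : E → E} {r' : E →L[ℝ] E} {x : E} {ρ : ℝ}
    (hρ : ρ ≠ 0) (hr : HasStrictFDerivAt r r' x) (hnorm : ∀ᶠ y in 𝓝 x, ‖r y‖ = ρ) :
    r'.det = 0 := by
  by_contra hdet
  have hsurj : r'.range = ⊤ := (LinearMap.isUnit_iff_range_eq_top _).1
    ((LinearMap.isUnit_iff_isUnit_det _).2 (isUnit_iff_ne_zero.2 hdet))
  have hmem : sphere (0 : E) ρ ∈ 𝓝 (r x) := by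
    rw [← hr.map_nhds_eq_of_surj hsurj]
    exact hnorm.mono fun y hy => mem_sphere_zero_iff_norm.2 hy
  rw [← mem_interior_iff_mem_nhds, interior_sphere _ hρ] at hmem
  exact hmem

section Volume

variable [MeasurableSpace E] [BorelSpace E] (μ : Measure E) [μ.IsAddHaarMeasure]

lemma eventually_integral_det_one_add_smul_fderiv {u : E → E} (hu : ContDiff ℝ 1 u)
    (hball : MapsTo (fun x => x + u x) (ball 0 1) (closedBall 0 1))
    (hsphere : ∀ x ∈ sphere (0 : E) 1, u x = 0) :
    ∀ᶠ t in 𝓝[>] (0 : ℝ),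
      ∫ x in ball (0 : E) 1, (1 + t • fderiv ℝ u x).det ∂μ = μ.real (ball 0 1) := by
  obtain ⟨K, hK⟩ := hu.contDiffOn.exists_lipschitzOnWith one_ne_zero (convex_closedBall (0 : E) 1)
    (isCompact_closedBall 0 1)
  have htK : ∀ᶠ t : ℝ in 𝓝[>] 0, t * (K : ℝ) < 1 :=
    ((continuous_mul_const (K : ℝ)).continuousWithinAt (x := 0)).tendsto.eventually_lt_const
      (by simp)
  filter_upwards [Ioo_mem_nhdsGT one_pos, htK, nhdsWithin_le_nhds
    (eventually_det_one_add_smul_fderiv_pos hu (isCompact_closedBall 0 1))] with t ht htK hpos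
  have hbij := bijOn_ball_add_smul hK hball hsphere ht.1 ht.2 htK
  have hderiv : ∀ x, HasFDerivAt (fun x => x + t • u x) (1 + t • fderiv ℝ u x) x := fun x =>
    (hasFDerivAt_id x).add ((hu.differentiable one_ne_zero x).hasFDerivAt.const_smul t)
  calc ∫ x in ball (0 : E) 1, (1 + t • fderiv ℝ u x).det ∂μ
      = ∫ x in ball (0 : E) 1, |(1 + t • fderiv ℝ u x).det| • (1 : ℝ) ∂μ :=
        setIntegral_congr_fun measurableSet_ball fun x hx => by
          simp only [smul_eq_mul, mul_one, abs_of_pos (hpos x (ball_subset_closedBall hx))]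
    _ = ∫ _ in (fun x => x + t • u x) '' ball 0 1, (1 : ℝ) ∂μ :=
        (integral_image_eq_integral_abs_det_fderiv_smul μ measurableSet_ball
          (fun x _ => (hderiv x).hasFDerivWithinAt) hbij.injOn fun _ => (1 : ℝ)).symm
    _ = μ.real (ball 0 1) := by rw [hbij.image_eq, setIntegral_const, smul_eq_mul, mul_one]

theorem integral_det_fderiv_eq_measureReal_ball {r : E → E} (hr : ContDiff ℝ 1 r)
    (hball : MapsTo r (ball 0 1) (closedBall 0 1)) (hsphere : EqOn r id (sphere 0 1)) :
    ∫ x in ball (0 : E) 1, (fderiv ℝ r x).det ∂μ = μ.real (ball 0 1) := by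
  let u : E → E := fun x => r x - x
  have hu : ContDiff ℝ 1 u := hr.sub contDiff_id
  have hfderiv : ∀ x, 1 + (1 : ℝ) • fderiv ℝ u x = fderiv ℝ r x := fun x => by
    have hu' : HasFDerivAt u (fderiv ℝ r x - 1) x :=
      (hr.differentiable one_ne_zero x).hasFDerivAt.sub (hasFDerivAt_id x)
    rw [hu'.fderiv, one_smul, add_sub_cancel]
  have hintegrable : ∀ t : ℝ, IntegrableOn (fun x => (1 + t • fderiv ℝ u x).det) (ball 0 1) μ :=
    fun t => (((continuous_det_one_add_smul_fderiv hu).comp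
      (Continuous.prodMk_right t)).continuousOn.integrableOn_compact
        (isCompact_closedBall 0 1)).mono_set ball_subset_closedBall
  obtain ⟨p, hp⟩ := exists_polynomial_integral_det_one_add_smul hintegrable
  have hsmall : ∀ᶠ t in 𝓝[>] (0 : ℝ), p.eval t = μ.real (ball (0 : E) 1) := by
    refine (eventually_integral_det_one_add_smul_fderiv μ hu ?_ ?_).mono fun t ht => hp t ▸ ht
    · simpa only [u, add_sub_cancel] using hball
    · exact fun x hx => sub_eq_zero.2 (hsphere hx)
  have hconst : p = Polynomial.C (μ.real (ball (0 : E) 1)) := by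
    obtain ⟨a, ha, hsub⟩ := mem_nhdsGT_iff_exists_Ioo_subset.1 hsmall
    refine p.eq_of_infinite_eval_eq _ ((Ioo_infinite ha).mono fun t ht => ?_)
    simpa only [mem_ofPred, Polynomial.eval_C] using hsub ht
  simp_rw [← hfderiv, hp, hconst, Polynomial.eval_C]

end Volume

theorem not_eqOn_id_sphere_of_mapsTo_sphere {r : E → E} (hr : ContDiff ℝ 1 r)
    (hmaps : MapsTo r (ball 0 1) (sphere 0 1)) : ¬ EqOn r id (sphere 0 1) := by
  intro hsphere
  borelize E
  have hzero : ∀ x ∈ ball (0 : E) 1, (fderiv ℝ r x).det = 0 := fun x hx =>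
    det_eq_zero_of_eventually_norm_eq one_ne_zero
      (hr.contDiffAt.hasStrictFDerivAt one_ne_zero)
      ((isOpen_ball.eventually_mem hx).mono fun y hy => mem_sphere_zero_iff_norm.1 (hmaps hy))
  have hvolume := integral_det_fderiv_eq_measureReal_ball Measure.addHaar hr
    (hmaps.mono_right sphere_subset_closedBall) hsphere
  rw [setIntegral_eq_zero_of_forall_eq_zero hzero] at hvolume
  exact (ENNReal.toReal_pos (measure_ball_pos _ _ one_pos).ne' measure_ball_lt_top.ne).ne hvolume

end ChangeOfVariables

section Brouwer

variable {E : Type*} [NormedAddCommGroup E] [InnerProductSpace ℝ E] [FiniteDimensional ℝ E]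

lemma exists_eq_of_contDiff_of_norm_le {φ : E → E} (hφ : ContDiff ℝ 1 φ) {ρ : ℝ}
    (hρ0 : 0 < ρ) (hρ1 : ρ < 1) (hbound : ∀ x ∈ closedBall (0 : E) 1, ‖φ x‖ ≤ ρ) :
    ∃ x ∈ closedBall (0 : E) 1, φ x = x := by
  by_contra! hne
  let b : ContDiffBump (0 : E) := ⟨ρ, 1, hρ0, hρ1⟩
  let g : E → E := fun x => x - b x • φ x
  have hg : ContDiff ℝ 1 g := contDiff_id.sub (b.contDiff.smul hφ)
  have hg_outside : ∀ x, 1 ≤ ‖x‖ → g x = x := fun x hx => by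
    simp [g, b.zero_of_le_dist (by simpa using hx)]
  have hg_ne : ∀ x, g x ≠ 0 := by
    intro x hx
    rcases le_or_gt 1 ‖x‖ with hout | hin
    · rw [hg_outside x hout] at hx
      norm_num [hx] at hout
    · have hxmem : x ∈ closedBall (0 : E) 1 := by simpa using hin.le
      have hxb : x = b x • φ x := sub_eq_zero.1 hx
      have hxρ : ‖x‖ ≤ ρ := calc
        ‖x‖ = b x * ‖φ x‖ := by
          conv_lhs => rw [hxb, norm_smul, Real.norm_of_nonneg b.nonneg]
        _ ≤ 1 * ρ := mul_le_mul b.le_one (hbound x hxmem) (norm_nonneg _) zero_le_one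
        _ = ρ := one_mul ρ
      rw [b.one_of_mem_closedBall (by simpa using hxρ), one_smul] at hxb
      exact hne x hxmem hxb.symm
  refine not_eqOn_id_sphere_of_mapsTo_sphere (r := fun x => ‖g x‖⁻¹ • g x)
    (((hg.norm ℝ hg_ne).inv fun x => norm_ne_zero_iff.2 (hg_ne x)).smul hg) ?_ ?_
  · intro x _
    rw [mem_sphere_zero_iff_norm, norm_smul, norm_inv, norm_norm,
      inv_mul_cancel₀ (norm_ne_zero_iff.2 (hg_ne x))]
  · intro x hx
    rw [mem_sphere_zero_iff_norm] at hx
    simp [hg_outside x hx.ge, hx]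

theorem exists_eq_of_mapsTo_closedBall {φ : E → E} (hφ : ContinuousOn φ (closedBall 0 1))
    (hmaps : MapsTo φ (closedBall 0 1) (closedBall 0 1)) :
    ∃ x ∈ closedBall (0 : E) 1, φ x = x := by
  by_contra! hne
  obtain ⟨Φ, hΦ⟩ := ContinuousMap.exists_restrict_eq (isClosed_closedBall (x := (0 : E)) (ε := 1))
    ⟨(closedBall (0 : E) 1).domRestrict φ, hφ.domRestrict⟩
  have hΦφ : ∀ x ∈ closedBall (0 : E) 1, Φ x = φ x := fun x hx => DFunLike.congr_fun hΦ ⟨x, hx⟩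
  obtain ⟨δ, hδ, hδΦ⟩ := (isCompact_closedBall (0 : E) 1).exists_forall_le'
    (f := fun x => ‖Φ x - x‖) (by fun_prop) (a := 0)
    (fun x hx => norm_pos_iff.2 (sub_ne_zero.2 (hΦφ x hx ▸ hne x hx)))
  let ε := min (δ / 3) (1 / 3)
  have hε : 0 < ε := by positivity
  have hεδ : ε ≤ δ / 3 := min_le_left _ _
  have hε1 : ε ≤ 1 / 3 := min_le_right _ _
  obtain ⟨P, hP, hPΦ, -⟩ := (Φ.continuous.const_smul (1 - 2 * ε)).exists_contDiff_approx (n := 1)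
    (ε := fun _ => ε) continuous_const (fun _ => hε)
  simp only [dist_eq_norm] at hPΦ
  have hΦ1 : ∀ x ∈ closedBall (0 : E) 1, ‖Φ x‖ ≤ 1 := fun x hx => by
    simpa [hΦφ x hx] using hmaps hx
  have hP_norm : ∀ x ∈ closedBall (0 : E) 1, ‖P x‖ ≤ 1 - ε := fun x hx => calc
    ‖P x‖ ≤ ‖P x - (1 - 2 * ε) • Φ x‖ + ‖(1 - 2 * ε) • Φ x‖ := norm_le_norm_sub_add _ _
    _ ≤ ε + (1 - 2 * ε) * 1 := by
      rw [norm_smul, Real.norm_of_nonneg (by linarith)]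
      gcongr
      · exact (hPΦ x).le
      · linarith
      · exact hΦ1 x hx
    _ = 1 - ε := by ring
  obtain ⟨x, hx, hPx⟩ := exists_eq_of_contDiff_of_norm_le (by exact_mod_cast hP) (by linarith)
    (by linarith) hP_norm
  have hclose : ‖Φ x - x‖ < δ := calc
    ‖Φ x - x‖ = ‖(2 * ε) • Φ x - (P x - (1 - 2 * ε) • Φ x)‖ := by rw [hPx]; congr 1; module
    _ ≤ ‖(2 * ε) • Φ x‖ + ‖P x - (1 - 2 * ε) • Φ x‖ := norm_sub_le _ _
    _ < 2 * ε * 1 + ε := by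
      rw [norm_smul, Real.norm_of_nonneg (by positivity)]
      exact add_lt_add_of_le_of_lt (by gcongr; exact hΦ1 x hx) (hPΦ x)
    _ ≤ δ := by linarith
  exact (hδΦ x hx).not_gt hclose

lemma exists_eq_zero_of_norm_sub_le_one {F : E → E} (hF : ContinuousOn F (closedBall 0 1))
    (hclose : ∀ x ∈ closedBall (0 : E) 1, ‖x - F x‖ ≤ 1) :
    ∃ x ∈ closedBall (0 : E) 1, F x = 0 := by
  obtain ⟨x, hx, hfix⟩ := exists_eq_of_mapsTo_closedBall (φ := fun x => x - F x)
    (continuousOn_id.sub hF) fun x hx => by simpa using hclose x hx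
  exact ⟨x, hx, by simpa using hfix⟩

end Brouwer

section InvarianceOfDomain

section Perturbation

variable {E : Type*} [NormedAddCommGroup E] [NormedSpace ℝ E]

lemma exists_contDiff_approx_ne_zero [FiniteDimensional ℝ E] [MeasurableSpace E] [BorelSpace E]
    (μ : Measure E) [μ.IsAddHaarMeasure] {G : E → E} (hG : Continuous G) {K S : Set E}
    (hK : IsCompact K) (hGK : ∀ y ∈ K, G y ≠ 0) (hS : μ S = 0) {ε : ℝ} (hε : 0 < ε) :
    ∃ P : E → E, ContDiff ℝ 1 P ∧ (∀ y, ‖P y - G y‖ < ε) ∧ ∀ y ∈ K ∪ S, P y ≠ 0 := by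
  obtain ⟨δ, hδ, hδG⟩ := hK.exists_forall_le' hG.norm.continuousOn (a := 0)
    fun y hy => norm_pos_iff.2 (hGK y hy)
  let η := min δ ε / 2
  have hη : 0 < η := by positivity
  obtain ⟨Q, hQ, hQG, -⟩ := hG.exists_contDiff_approx (n := 1) (ε := fun _ => η)
    continuous_const fun _ => hη
  replace hQ : ContDiff ℝ 1 Q := by exact_mod_cast hQ
  have hnull : μ (Q '' S) = 0 := addHaar_image_eq_zero_of_differentiableOn_of_addHaar_eq_zero μ
    (hQ.differentiable one_ne_zero).differentiableOn hS
  obtain ⟨v, hv, hvQ⟩ : ∃ v ∈ ball (0 : E) η, v ∉ Q '' S := by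
    by_contra! hsub
    exact (measure_ball_pos μ (0 : E) hη).ne' (measure_mono_null hsub hnull)
  have hclose : ∀ y, ‖Q y - v - G y‖ < min δ ε := fun y => calc
    ‖Q y - v - G y‖ = ‖Q y - G y - v‖ := by rw [sub_right_comm]
    _ ≤ ‖Q y - G y‖ + ‖v‖ := norm_sub_le _ _
    _ < η + η := add_lt_add (dist_eq_norm (Q y) (G y) ▸ hQG y) (mem_ball_zero_iff.1 hv)
    _ = min δ ε := add_halves _
  refine ⟨fun y => Q y - v, hQ.sub contDiff_const, fun y => (hclose y).trans_le (min_le_right _ _),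
    ?_⟩
  rintro y (hy | hy) hzero
  · have hGy := (hclose y).trans_le (min_le_left _ _)
    have hPy : Q y - v = 0 := hzero
    rw [hPy, zero_sub, norm_neg] at hGy
    exact (hδG y hy).not_gt hGy
  · exact hvQ ⟨y, hy, sub_eq_zero.1 hzero⟩

/-- The radial map that pushes the punctured ball of radius `ε` about `c` onto its bounding sphere
and fixes all points outside the ball. At `c` itself it has the meaningless value `c`. -/
def radialPush (c : E) (ε : ℝ) (y : E) : E := c + max 1 (ε / ‖y - c‖) • (y - c)

lemma continuousOn_radialPush (c : E) (ε : ℝ) : ContinuousOn (radialPush c ε) {c}ᶜ := by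
  have hdiv : ContinuousOn (fun y => ε / ‖y - c‖) {c}ᶜ :=
    continuousOn_const.div (by fun_prop) fun y hy => norm_ne_zero_iff.2 (sub_ne_zero.2 hy)
  exact continuousOn_const.add ((continuousOn_const.sup hdiv).smul (by fun_prop))

lemma radialPush_of_le_norm {c y : E} {ε : ℝ} (hy : ε ≤ ‖y - c‖) : radialPush c ε y = y := by
  have hratio : ε / ‖y - c‖ ≤ 1 := div_le_one_of_le₀ hy (norm_nonneg _)
  simp [radialPush, max_eq_left hratio]

lemma radialPush_mem_sphere {c y : E} {ε : ℝ} (hyc : y ≠ c) (hy : ‖y - c‖ ≤ ε) :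
    radialPush c ε y ∈ sphere c ε := by
  have hpos : 0 < ‖y - c‖ := norm_pos_iff.2 (sub_ne_zero.2 hyc)
  have hratio : 1 ≤ ε / ‖y - c‖ := (one_le_div hpos).2 hy
  rw [mem_sphere_iff_norm, radialPush, max_eq_right hratio, add_sub_cancel_left, norm_smul,
    Real.norm_of_nonneg (by positivity), div_mul_cancel₀ _ hpos.ne']

lemma exists_approx_ne_zero_of_norm_le [FiniteDimensional ℝ E] {G : E → E} (hG : Continuous G)
    {K : Set E} (hK : IsCompact K) {c : E} (hc : c ∉ K) {ε η : ℝ} (hε : 0 < ε) (hη : 0 < η)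
    (hsmall : ∀ y ∈ closedBall c ε, ‖G y‖ ≤ η) (hne : ∀ y ∈ K \ ball c ε, G y ≠ 0) :
    ∃ H : E → E, ContinuousOn H K ∧ ∀ y ∈ K, ‖G y - H y‖ ≤ 3 * η ∧ H y ≠ 0 := by
  borelize E
  -- The part of `K` where `G` may vanish is pushed to a sphere: spheres are null sets, so a small
  -- perturbation `P` of `G` has no zeros there.
  obtain ⟨P, hP, hPG, hP_ne⟩ := exists_contDiff_approx_ne_zero Measure.addHaar hG
    (hK.diff isOpen_ball) hne (Measure.addHaar_sphere_of_ne_zero _ c hε.ne') hη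
  have hKc : K ⊆ {c}ᶜ := fun y hy => ne_of_mem_of_not_mem hy hc
  refine ⟨fun y => P (radialPush c ε y),
    hP.continuous.comp_continuousOn ((continuousOn_radialPush c ε).mono hKc), fun y hy => ?_⟩
  change ‖G y - P (radialPush c ε y)‖ ≤ 3 * η ∧ P (radialPush c ε y) ≠ 0
  rcases le_or_gt ε ‖y - c‖ with hfar | hnear
  · rw [radialPush_of_le_norm hfar]
    refine ⟨?_, hP_ne y (Or.inl ⟨hy, by simpa [dist_eq_norm] using hfar⟩)⟩
    rw [norm_sub_rev]
    linarith [hPG y]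
  · have hpush := radialPush_mem_sphere (hKc hy) hnear.le
    set z := radialPush c ε y
    refine ⟨?_, hP_ne z (Or.inr hpush)⟩
    calc ‖G y - P z‖ = ‖G y - G z - (P z - G z)‖ := by rw [sub_sub_sub_cancel_right]
      _ ≤ ‖G y‖ + ‖G z‖ + ‖P z - G z‖ :=
        (norm_sub_le _ _).trans (add_le_add_left (norm_sub_le _ _) _)
      _ ≤ η + η + η := by
        gcongr
        · exact hsmall y (mem_closedBall_iff_norm.2 hnear.le)
        · exact hsmall z (sphere_subset_closedBall hpush)
        · exact (hPG z).le
      _ = 3 * η := by ring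

lemma exists_continuousMap_leftInvOn [FiniteDimensional ℝ E] {Y : Type*} [TopologicalSpace Y]
    [T4Space Y] {f : E → Y} {s : Set E} (hs : IsCompact s) (hf : ContinuousOn f s)
    (hinj : InjOn f s) : ∃ G : C(Y, E), LeftInvOn G f s := by
  have : CompactSpace s := isCompact_iff_compactSpace.1 hs
  have hemb : Topology.IsClosedEmbedding (s.domRestrict f) :=
    hf.domRestrict.isClosedEmbedding (injOn_iff_injective.1 hinj)
  have : TietzeExtension E := TietzeExtension.of_tvs ℝ
  obtain ⟨G, hG⟩ := ContinuousMap.exists_extension' hemb ⟨Subtype.val, continuous_subtype_val⟩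
  exact ⟨G, fun x hx => congrFun hG ⟨x, hx⟩⟩

end Perturbation

theorem image_closedBall_mem_nhds {E : Type*} [NormedAddCommGroup E] [InnerProductSpace ℝ E]
    [FiniteDimensional ℝ E] {f : E → E} (hf : ContinuousOn f (closedBall 0 1))
    (hinj : InjOn f (closedBall 0 1)) : f '' closedBall 0 1 ∈ 𝓝 (f 0) := by
  by_contra hnhds
  have hB := isCompact_closedBall (0 : E) 1
  have h0B : (0 : E) ∈ closedBall (0 : E) 1 := mem_closedBall_self zero_le_one
  obtain ⟨G, hG⟩ := exists_continuousMap_leftInvOn hB hf hinj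
  have hsmall : ∀ᶠ y in 𝓝 (f 0), ‖G y‖ < 1 / 3 :=
    G.continuous.norm.continuousAt.eventually_lt_const (by simp [hG h0B])
  obtain ⟨ρ, hρ, hGρ⟩ := Metric.eventually_nhds_iff_ball.1 hsmall
  obtain ⟨c, hc, hcf⟩ : ∃ c ∈ ball (f 0) (ρ / 2), c ∉ f '' closedBall 0 1 := by
    by_contra! hsub
    exact hnhds (mem_of_superset (ball_mem_nhds _ (half_pos hρ)) hsub)
  have hball : closedBall c (ρ / 2) ⊆ ball (f 0) ρ :=
    closedBall_subset_ball' (by linarith [mem_ball.1 hc])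
  have hne : ∀ y ∈ f '' closedBall 0 1 \ ball c (ρ / 2), G y ≠ 0 := by
    rintro _ ⟨⟨x, hx, rfl⟩, hfar⟩ hzero
    obtain rfl : x = 0 := (hG hx).symm.trans hzero
    exact hfar (mem_ball_comm.1 hc)
  obtain ⟨H, hH, hHG⟩ := exists_approx_ne_zero_of_norm_le G.continuous
    (hB.image_of_continuousOn hf) hcf (half_pos hρ) (by norm_num : (0 : ℝ) < 1 / 3)
    (fun y hy => (hGρ y (hball hy)).le) hne
  obtain ⟨x, hx, hzero⟩ := exists_eq_zero_of_norm_sub_le_one (F := H ∘ f)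
    (hH.comp hf (mapsTo_image _ _)) fun x hx => by
      simpa [hG hx] using (hHG (f x) (mem_image_of_mem f hx)).1
  exact (hHG (f x) (mem_image_of_mem f hx)).2 hzero

variable {E F : Type*} [NormedAddCommGroup E] [NormedSpace ℝ E] [FiniteDimensional ℝ E]
  [NormedAddCommGroup F] [NormedSpace ℝ F] [FiniteDimensional ℝ F]

theorem isOpen_image_of_continuousOn_injOn (hEF : finrank ℝ E = finrank ℝ F) {f : E → F}
    {s : Set E} (hs : IsOpen s) (hf : ContinuousOn f s) (hinj : InjOn f s) : IsOpen (f '' s) := by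
  refine isOpen_iff_mem_nhds.2 (forall_mem_image.2 fun x hx => ?_)
  let e : Euc (finrank ℝ E) ≃L[ℝ] E := .ofFinrankEq finrank_euclideanSpace_fin
  let e' : F ≃L[ℝ] Euc (finrank ℝ E) :=
    .ofFinrankEq (hEF.symm.trans finrank_euclideanSpace_fin.symm)
  have hchart : Continuous fun z => x + e z := by fun_prop
  obtain ⟨ε, hε, hεs⟩ := Metric.nhds_basis_closedBall.mem_iff.1
    (hchart.continuousAt.preimage_mem_nhds (x := 0) (hs.mem_nhds (by simpa using hx)))
  let a : Euc (finrank ℝ E) → E := fun z => x + e (ε • z)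
  have ha : Continuous a := by fun_prop
  have ha_inj : Function.Injective a :=
    (add_right_injective x).comp (e.injective.comp (smul_right_injective _ hε.ne'))
  have ha_maps : MapsTo a (closedBall 0 1) s := fun z hz => hεs (by
    rw [mem_closedBall_zero_iff] at hz ⊢
    rw [norm_smul, Real.norm_of_nonneg hε.le]
    exact mul_le_of_le_one_right hε.le hz)
  have hmem := image_closedBall_mem_nhds (f := e' ∘ f ∘ a)
    (e'.continuous.comp_continuousOn (hf.comp ha.continuousOn ha_maps))
    (e'.injective.comp_injOn (hinj.comp ha_inj.injOn ha_maps))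
  have ha0 : a 0 = x := by simp [a]
  rw [image_comp, Function.comp_apply, Function.comp_apply, ha0] at hmem
  have hpre := e'.continuous.continuousAt.preimage_mem_nhds hmem
  rw [preimage_image_eq _ e'.injective, image_comp] at hpre
  exact mem_of_superset hpre (image_mono ha_maps.image_subset)

theorem isOpenEmbedding_of_continuous_injective (hEF : finrank ℝ E = finrank ℝ F) {f : E → F}
    (hf : Continuous f) (hinj : Function.Injective f) : Topology.IsOpenEmbedding f :=
  .of_continuous_injective_isOpenMap hf hinj fun _ hs =>
    isOpen_image_of_continuousOn_injOn hEF hs hf.continuousOn hinj.injOn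

end InvarianceOfDomain

section LevelSets

/-- The fibre product of two embeddings into `Z`, realised inside either factor. It moves a level
set, which is a preimage under `h`, into the affine subspace parametrised by `e`. -/
def homeomorphPreimageRange {X Y Z : Type*} [TopologicalSpace X] [TopologicalSpace Y]
    [TopologicalSpace Z] {h : X → Z} {e : Y → Z} (hh : Topology.IsEmbedding h)
    (he : Topology.IsEmbedding e) : h ⁻¹' range e ≃ₜ e ⁻¹' range h :=
  (hh.homeomorphImage _).trans ((Homeomorph.setCongr (by
    rw [image_preimage_eq_inter_range, image_preimage_eq_inter_range, inter_comm])).trans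
    (he.homeomorphImage _).symm)

lemma exists_isEmbedding_range_eq_affineSubspace {E : Type*} [NormedAddCommGroup E]
    [NormedSpace ℝ E] (A : AffineSubspace ℝ E) [FiniteDimensional ℝ A.direction] [Nonempty A]
    {d : ℕ} (hd : finrank ℝ A.direction = d) :
    ∃ e : Euc d → E, Topology.IsEmbedding e ∧ range e = A := by
  obtain ⟨p⟩ := ‹Nonempty A›
  let φ : Euc d ≃L[ℝ] A.direction := .ofFinrankEq (finrank_euclideanSpace_fin.trans hd.symm)
  let θ : Euc d ≃ₜ A := φ.toHomeomorph.trans (IsometryEquiv.vaddConst p).toHomeomorph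
  refine ⟨Subtype.val ∘ θ, Topology.IsEmbedding.subtypeVal.comp θ.isEmbedding, ?_⟩
  rw [θ.surjective.range_comp, Subtype.range_coe]

theorem exists_isOpen_homeomorph_preimage_affineSubspace {X E : Type*} [TopologicalSpace X]
    [NormedAddCommGroup E] [NormedSpace ℝ E] {h : X → E} (hh : Topology.IsOpenEmbedding h)
    (A : AffineSubspace ℝ E) [FiniteDimensional ℝ A.direction] [Nonempty A] {d : ℕ}
    (hd : finrank ℝ A.direction = d) :
    ∃ U : Set (Euc d), IsOpen U ∧ Nonempty (h ⁻¹' A ≃ₜ U) := by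
  obtain ⟨e, he, hrange⟩ := exists_isEmbedding_range_eq_affineSubspace A hd
  refine ⟨e ⁻¹' range h, hh.isOpen_range.preimage he.continuous, ?_⟩
  rw [← hrange]
  exact ⟨homeomorphPreimageRange hh.isEmbedding he⟩

lemma not_isCompact_pathComponent {X Y : Type*} [TopologicalSpace X] [TopologicalSpace Y]
    [T2Space Y] [PreconnectedSpace Y] [LocallyPathConnectedSpace Y] [NoncompactSpace Y] {j : X → Y}
    (hj : Topology.IsOpenEmbedding j) (x : X) : ¬ IsCompact (pathComponent x) := by
  intro hcompact
  have := hj.locallyPathConnectedSpace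
  have himage : IsCompact (j '' pathComponent x) := hcompact.image hj.continuous
  have huniv : j '' pathComponent x = univ :=
    IsClopen.eq_univ ⟨himage.isClosed, hj.isOpenMap _ (IsClopen.pathComponent x).isOpen⟩
      ⟨j x, mem_image_of_mem j (mem_pathComponent_self x)⟩
  exact noncompact_univ Y (huniv ▸ himage)

theorem not_isBounded_setOf_joinedIn {E Y : Type*} [PseudoMetricSpace E] [ProperSpace E]
    [TopologicalSpace Y] [T2Space Y] [PreconnectedSpace Y] [LocallyPathConnectedSpace Y]
    [NoncompactSpace Y] {S : Set E} (hS : IsClosed S) {j : S → Y}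
    (hj : Topology.IsOpenEmbedding j) {x : E} (hx : x ∈ S) :
    ¬ Bornology.IsBounded {z | JoinedIn S x z} := by
  intro hbounded
  have := hj.locallyPathConnectedSpace
  have hclosed : IsClosed (pathComponent (⟨x, hx⟩ : S)) := (IsClopen.pathComponent _).isClosed
  have hsub : Subtype.val '' pathComponent (⟨x, hx⟩ : S) ⊆ {z | JoinedIn S x z} := by
    rintro _ ⟨z, hz, rfl⟩
    exact (joinedIn_iff_joined hx z.2).2 hz
  refine not_isCompact_pathComponent hj ⟨x, hx⟩ (Subtype.isCompact_iff.2 ?_)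
  exact isCompact_of_isClosed_isBounded (hS.isClosedMap_subtype_val _ hclosed)
    (hbounded.subset hsub)

lemma preimage_singleton_eq_mk'_ker {k F V : Type*} [Ring k] [AddCommGroup F] [Module k F]
    [AddCommGroup V] [Module k V] (L : F →ᵃ[k] V) (p : F) :
    L ⁻¹' {L p} = AffineSubspace.mk' p L.linear.ker := by
  ext z
  rw [mem_preimage, mem_singleton_iff, SetLike.mem_coe, AffineSubspace.mem_mk', LinearMap.mem_ker,
    L.linearMap_vsub, vsub_eq_sub, sub_eq_zero]

theorem generic_composition_level_sets_general {E F V α : Type*}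
    [NormedAddCommGroup E] [NormedSpace ℝ E] [FiniteDimensional ℝ E]
    [NormedAddCommGroup F] [NormedSpace ℝ F] [FiniteDimensional ℝ F]
    [AddCommGroup V] [Module ℝ V] (hEF : finrank ℝ E = finrank ℝ F)
    (h : E → F) (hc : Continuous h) (hinj : Function.Injective h)
    (L : F →ᵃ[ℝ] V) {d : ℕ} (hd : finrank ℝ L.linear.ker = d) (hd_pos : 0 < d)
    (ψ : V → α) (hψ : Function.Injective ψ)
    (f : E → α) (hf : f = fun x => ψ (L (h x))) (y : α) :
    (∃ U : Set (Euc d), IsOpen U ∧ Nonempty (↥(f ⁻¹' {y}) ≃ₜ ↥U)) ∧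
    ∀ x ∈ f ⁻¹' {y}, ¬ Bornology.IsBounded {z | JoinedIn (f ⁻¹' {y}) x z} := by
  rcases (f ⁻¹' {y}).eq_empty_or_nonempty with hempty | ⟨x₀, rfl⟩
  · rw [hempty]
    exact ⟨⟨∅, isOpen_empty, ⟨Homeomorph.empty⟩⟩, fun _ hx => hx.elim⟩
  let A := AffineSubspace.mk' (h x₀) L.linear.ker
  have hlevel : f ⁻¹' {f x₀} = h ⁻¹' A := by
    rw [← preimage_singleton_eq_mk'_ker]
    ext x
    simp only [hf, mem_preimage, mem_singleton_iff, hψ.eq_iff]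
  have hdirection : finrank ℝ A.direction = d := by rw [AffineSubspace.direction_mk', hd]
  have hemb := isOpenEmbedding_of_continuous_injective hEF hc hinj
  have : Nonempty A := ⟨⟨h x₀, AffineSubspace.self_mem_mk' _ _⟩⟩
  obtain ⟨U, hU, ⟨θ⟩⟩ := exists_isOpen_homeomorph_preimage_affineSubspace hemb A hdirection
  rw [hlevel]
  refine ⟨⟨U, hU, ⟨θ⟩⟩, fun x hx => ?_⟩
  have : Nonempty (Fin d) := ⟨⟨0, hd_pos⟩⟩
  exact not_isBounded_setOf_joinedIn (A.closed_of_finiteDimensional.preimage hc)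
    (hU.isOpenEmbedding_subtypeVal.comp θ.isOpenEmbedding) hx

end LevelSets

/-- **Statement 8.** Let `n ≥ 2`, let `h : ℝⁿ → ℝⁿ` be continuous and
injective, let `L : ℝⁿ → ℝ` be an affine map with nonzero linear part, and let
`ψ : ℝ → ℝ` be continuous and injective. Set `f = ψ ∘ L ∘ h`. Then for every
`y ∈ ℝ`, the level set `f⁻¹(y)` is homeomorphic to an open subset of
`ℝ^{n-1}`, and every path component of `f⁻¹(y)` is unbounded. -/
theorem generic_composition_level_sets
    {n : ℕ} (hn : 2 ≤ n)
    (h : Euc n → Euc n) (hc : Continuous h) (hinj : Function.Injective h)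
    (L : Euc n →ᵃ[ℝ] ℝ) (hL : L.linear ≠ 0)
    (ψ : ℝ → ℝ) (hψc : Continuous ψ) (hψi : Function.Injective ψ)
    (f : Euc n → ℝ) (hf : f = fun x => ψ (L (h x))) (y : ℝ) :
    (∃ U : Set (Euc (n - 1)), IsOpen U ∧ Nonempty (↥(f ⁻¹' {y}) ≃ₜ ↥U)) ∧
    ∀ x ∈ f ⁻¹' {y},
      ¬ Bornology.IsBounded {z | JoinedIn (f ⁻¹' {y}) x z} := by
  have hker := Module.Dual.finrank_ker_add_one_of_ne_zero hL
  rw [finrank_euclideanSpace_fin] at hker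
  exact generic_composition_level_sets_general rfl h hc hinj L (by omega) (by omega) ψ hψi f hf y
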